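/- Let ρ₀ satisfy the stated first-order equation with limits a and b at ∓∞. Let v : ℝ → ℝ be twice continuously differentiable and bounded with lim_{z→±∞} v'(z) = 0, let h : ℝ → ℝ be continuous with ∫_ℝ |h(z)ρ₀(z)| dz < ∞, and suppose −v''(z) + f_B(ρ₀(z))v(z) = h(z) for all z ∈ ℝ. Then ∫_ℝ h(z) ρ₀(z) dz = 0. -/

import Mathlib

/-!
Differentiating the profile equation `ρ₀' = g(ρ₀)` gives `ρ₀'' = g'(ρ₀) g(ρ₀) = f_B(ρ₀) ρ₀`, so `ρ₀`
lies in the kernel of the self-adjoint operator `-∂² + f_B(ρ₀)`. By Lagrange's identity the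
Wronskian `ρ₀' v - ρ₀ v'` is therefore a primitive of `ρ₀ h`. It vanishes at `±∞`: in each of its
products one factor is bounded and the other, `ρ₀'` or `v'`, tends to `0`.
-/

open Filter MeasureTheory

/-- `f_B(ρ) = (ρ² − a²)(ρ² − b²)(2ρ² − a² − b²)`. -/
noncomputable def fB (a b ρ : ℝ) : ℝ :=
  (ρ ^ 2 - a ^ 2) * (ρ ^ 2 - b ^ 2) * (2 * ρ ^ 2 - a ^ 2 - b ^ 2)

section Wronskian

variable {E : Type*} [NormedAddCommGroup E] [NormedSpace ℝ E] {ρ ρ' q : ℝ → ℝ} {v v' h : ℝ → E}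

/-- The Wronskian `ρ' v - ρ v'` of a scalar function `ρ` and a vector-valued function `v`, whose
derivatives `ρ'` and `v'` are passed as separate arguments. The sign is chosen so that it is a
primitive of `ρ h` when `ρ'' = q ρ` and `-v'' + q v = h`. -/
def wronskian (ρ ρ' : ℝ → ℝ) (v v' : ℝ → E) (z : ℝ) : E :=
  ρ' z • v z - ρ z • v' z

theorem hasDerivAt_wronskian {z : ℝ} (hρ : HasDerivAt ρ (ρ' z) z)
    (hρ' : HasDerivAt ρ' (q z * ρ z) z) (hv : HasDerivAt v (v' z) z)
    (hv' : HasDerivAt v' (q z • v z - h z) z) :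
    HasDerivAt (wronskian ρ ρ' v v') (ρ z • h z) z := by
  refine ((hρ'.smul hv).sub (hρ.smul hv')).congr_deriv ?_
  module

theorem tendsto_wronskian_zero {l : Filter ℝ} (hρ : IsBoundedUnder (· ≤ ·) l (norm ∘ ρ))
    (hρ' : Tendsto ρ' l (nhds 0)) (hv : IsBoundedUnder (· ≤ ·) l (norm ∘ v))
    (hv' : Tendsto v' l (nhds 0)) :
    Tendsto (wronskian ρ ρ' v v') l (nhds 0) := by
  have hsub : Tendsto (wronskian ρ ρ' v v') l (nhds (0 - 0)) :=
    (hρ'.zero_smul_isBoundedUnder_le hv).sub (hρ.smul_tendsto_zero hv')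
  rwa [sub_zero] at hsub

theorem integral_smul_eq_zero_of_tendsto_wronskian_zero [CompleteSpace E]
    (hρ : ∀ z, HasDerivAt ρ (ρ' z) z) (hρ' : ∀ z, HasDerivAt ρ' (q z * ρ z) z)
    (hv : ∀ z, HasDerivAt v (v' z) z) (hv' : ∀ z, HasDerivAt v' (q z • v z - h z) z)
    (hint : Integrable (fun z => ρ z • h z))
    (hbot : Tendsto (wronskian ρ ρ' v v') atBot (nhds 0))
    (htop : Tendsto (wronskian ρ ρ' v v') atTop (nhds 0)) :
    ∫ z, ρ z • h z = 0 := by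
  simpa only [sub_zero] using integral_of_hasDerivAt_of_tendsto
    (fun z => hasDerivAt_wronskian (hρ z) (hρ' z) (hv z) (hv' z)) hint hbot htop

end Wronskian

section Profile

/-- The right-hand side `g(x) = (√2/2)(x² - a²)(b² - x²)` of the profile equation `ρ' = g(ρ)`. -/
noncomputable def profileSlope (a b x : ℝ) : ℝ :=
  Real.sqrt 2 / 2 * (x ^ 2 - a ^ 2) * (b ^ 2 - x ^ 2)

variable (a b : ℝ)

theorem profileSlope_left : profileSlope a b a = 0 := by
  simp [profileSlope]

theorem profileSlope_right : profileSlope a b b = 0 := by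
  simp [profileSlope]

theorem hasDerivAt_profileSlope (x : ℝ) :
    HasDerivAt (profileSlope a b) (Real.sqrt 2 * x * (a ^ 2 + b ^ 2 - 2 * x ^ 2)) x := by
  have hsq : HasDerivAt (fun y : ℝ => y ^ 2) (2 * x) x := by simpa using hasDerivAt_pow 2 x
  refine (((hsq.sub_const (a ^ 2)).const_mul (Real.sqrt 2 / 2)).mul
    (hsq.const_sub (b ^ 2))).congr_deriv ?_
  ring

theorem deriv_profileSlope_mul_profileSlope (x : ℝ) :
    deriv (profileSlope a b) x * profileSlope a b x = fB a b x * x := by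
  have hsqrt : Real.sqrt 2 ^ 2 = 2 := Real.sq_sqrt zero_le_two
  rw [(hasDerivAt_profileSlope a b x).deriv, profileSlope, fB]
  linear_combination
    (x * (a ^ 2 + b ^ 2 - 2 * x ^ 2) * (x ^ 2 - a ^ 2) * (b ^ 2 - x ^ 2) / 2) * hsqrt

variable {a b} {ρ : ℝ → ℝ}

theorem hasDerivAt_profileSlope_comp {z : ℝ} (hρ : HasDerivAt ρ (profileSlope a b (ρ z)) z) :
    HasDerivAt (profileSlope a b ∘ ρ) (fB a b (ρ z) * ρ z) z := by
  rw [← deriv_profileSlope_mul_profileSlope]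
  exact (hasDerivAt_profileSlope a b (ρ z)).differentiableAt.hasDerivAt.comp z hρ

theorem tendsto_wronskian_profile_zero {E : Type*} [NormedAddCommGroup E] [NormedSpace ℝ E]
    {v v' : ℝ → E} {l : Filter ℝ} {c : ℝ} (hc : profileSlope a b c = 0)
    (hρ : Tendsto ρ l (nhds c)) (hv : IsBoundedUnder (· ≤ ·) l (norm ∘ v))
    (hv' : Tendsto v' l (nhds 0)) :
    Tendsto (wronskian ρ (profileSlope a b ∘ ρ) v v') l (nhds 0) := by
  have hslope : Tendsto (profileSlope a b ∘ ρ) l (nhds 0) :=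
    hc ▸ (hasDerivAt_profileSlope a b c).continuousAt.tendsto.comp hρ
  exact tendsto_wronskian_zero hρ.norm.isBoundedUnder_le hslope hv hv'

end Profile

theorem statement10_general {E : Type*} [NormedAddCommGroup E] [NormedSpace ℝ E] [CompleteSpace E]
    {a b α β : ℝ} (hα : profileSlope a b α = 0) (hβ : profileSlope a b β = 0) {ρ : ℝ → ℝ}
    (hρ : Differentiable ℝ ρ) (hderiv : ∀ z, deriv ρ z = profileSlope a b (ρ z))
    (hbot : Tendsto ρ atBot (nhds α)) (htop : Tendsto ρ atTop (nhds β))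
    {v h : ℝ → E} (hv : Differentiable ℝ v) (hv' : Differentiable ℝ (deriv v))
    (hvbd : ∃ M, ∀ z, ‖v z‖ ≤ M)
    (hv'top : Tendsto (deriv v) atTop (nhds 0)) (hv'bot : Tendsto (deriv v) atBot (nhds 0))
    (hint : Integrable (fun z => ρ z • h z))
    (heq : ∀ z, -(deriv (deriv v) z) + fB a b (ρ z) • v z = h z) :
    ∫ z, ρ z • h z = 0 := by
  obtain ⟨M, hM⟩ := hvbd
  have hvbd (l : Filter ℝ) : IsBoundedUnder (· ≤ ·) l (norm ∘ v) := isBoundedUnder_of ⟨M, hM⟩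
  have hρ' (z : ℝ) : HasDerivAt ρ (profileSlope a b (ρ z)) z := hderiv z ▸ (hρ z).hasDerivAt
  have hv'' (z : ℝ) : HasDerivAt (deriv v) (fB a b (ρ z) • v z - h z) z := by
    refine (hv' z).hasDerivAt.congr_deriv ?_
    rw [← heq z]
    abel
  exact integral_smul_eq_zero_of_tendsto_wronskian_zero (q := fun z => fB a b (ρ z)) hρ'
    (fun z => hasDerivAt_profileSlope_comp (hρ' z)) (fun z => (hv z).hasDerivAt) hv'' hint
    (tendsto_wronskian_profile_zero hα hbot (hvbd atBot) hv'bot)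
    (tendsto_wronskian_profile_zero hβ htop (hvbd atTop) hv'top)

/-- (Compatibility condition for the `f_B` operator.) If `v` is `C²`,
bounded, with `v'(±∞) = 0`, `h` continuous with `h ρ₀` integrable, and
`−v'' + f_B(ρ₀)v = h`, then `∫_ℝ h ρ₀ = 0`. -/
theorem statement10 (a b : ℝ) (ha : 0 < a) (hab : a < b) (ρ₀ : ℝ → ℝ)
    (hreg : ContDiff ℝ 1 ρ₀)
    (hderiv : ∀ z, deriv ρ₀ z =
      Real.sqrt 2 / 2 * ((ρ₀ z) ^ 2 - a ^ 2) * (b ^ 2 - (ρ₀ z) ^ 2))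
    (hbnd : ∀ z, a < ρ₀ z ∧ ρ₀ z < b)
    (hbot : Tendsto ρ₀ atBot (nhds a))
    (htop : Tendsto ρ₀ atTop (nhds b))
    (v h : ℝ → ℝ) (hv : ContDiff ℝ 2 v)
    (hvbd : ∃ M, ∀ z, |v z| ≤ M)
    (hv'top : Tendsto (deriv v) atTop (nhds 0))
    (hv'bot : Tendsto (deriv v) atBot (nhds 0))
    (hh : Continuous h)
    (hint : Integrable (fun z => h z * ρ₀ z))
    (heq : ∀ z, -(deriv (deriv v) z) + fB a b (ρ₀ z) * v z = h z) :
    (∫ z : ℝ, h z * ρ₀ z) = 0 := by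
  simpa only [smul_eq_mul, mul_comm] using statement10_general (profileSlope_left a b)
    (profileSlope_right a b) (hreg.differentiable one_ne_zero) hderiv hbot htop
    (hv.differentiable two_ne_zero) hv.differentiable_deriv_two hvbd hv'top hv'bot
    (by simpa only [smul_eq_mul, mul_comm] using hint) heq
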